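/- Let D < −4 be an integer with D ≡ 0 or 1 (mod 4), and let r > 1 be an odd integer with prime factorization r = ∏_{i=1}^{k} p_i^{e_i}. Define φ_D(r) = ∏_{i=1}^{k} p_i^{e_i − 1} · (p_i − (D/p_i)). Then h(D·r²) = h(D) · φ_D(r). -/

import Mathlib

/-- A binary quadratic form `(a, b, c)` evaluated at `(x, y)`. -/
def qfEval (f : ℤ × ℤ × ℤ) (x y : ℤ) : ℤ :=
  f.1 * x ^ 2 + f.2.1 * x * y + f.2.2 * y ^ 2

/-- The discriminant `b² - 4ac` of the form `(a, b, c)`. -/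
def qfDisc (f : ℤ × ℤ × ℤ) : ℤ := f.2.1 ^ 2 - 4 * f.1 * f.2.2

/-- The form `(a, b, c)` is primitive if `gcd(a, b, c) = 1`. -/
def IsPrimitiveQF (f : ℤ × ℤ × ℤ) : Prop :=
  Int.gcd (Int.gcd f.1 f.2.1) f.2.2 = 1

/-- `f` is derived from `g` via the matrix `A`, i.e. `f(x,y) = g(A·(x,y)ᵀ)`. -/
def DerivedVia (f g : ℤ × ℤ × ℤ) (A : Matrix (Fin 2) (Fin 2) ℤ) : Prop :=
  ∀ x y : ℤ, qfEval f x y = qfEval g (A 0 0 * x + A 0 1 * y) (A 1 0 * x + A 1 1 * y)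

/-- Two forms are equivalent if one is derived from the other via a determinant-1
integer matrix. -/
def QFEquiv (f g : ℤ × ℤ × ℤ) : Prop :=
  ∃ A : Matrix (Fin 2) (Fin 2) ℤ, A.det = 1 ∧ DerivedVia f g A

/-- The class number `h(D)`: the number of equivalence classes of primitive binary
quadratic forms of discriminant `D` with positive leading coefficient. -/
noncomputable def classNumber (D : ℤ) : ℕ :=
  Nat.card (Quot fun f g : {f : ℤ × ℤ × ℤ // qfDisc f = D ∧ IsPrimitiveQF f ∧ 0 < f.1} =>
    QFEquiv f.1 g.1)

/-- `φ_D(r) = ∏ p^(e_p - 1) · (p - (D/p))` over the prime factorization `r = ∏ p^e_p`.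
For a prime `p`, the Jacobi symbol `J(D | p)` is the Legendre symbol `(D/p)`. -/
def phiD (D : ℤ) (r : ℕ) : ℤ :=
  ∏ p ∈ r.primeFactors, (p : ℤ) ^ (r.factorization p - 1) * ((p : ℤ) - jacobiSym D p)


/-- The form `f ∘ M`. -/
def qfAct (f : ℤ × ℤ × ℤ) (M : Matrix (Fin 2) (Fin 2) ℤ) : ℤ × ℤ × ℤ :=
  (f.1 * M 0 0 ^ 2 + f.2.1 * M 0 0 * M 1 0 + f.2.2 * M 1 0 ^ 2,
   2 * f.1 * M 0 0 * M 0 1 + f.2.1 * (M 0 0 * M 1 1 + M 0 1 * M 1 0) + 2 * f.2.2 * M 1 0 * M 1 1,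
   f.1 * M 0 1 ^ 2 + f.2.1 * M 0 1 * M 1 1 + f.2.2 * M 1 1 ^ 2)

lemma derivedVia_qfAct (f : ℤ × ℤ × ℤ) (M : Matrix (Fin 2) (Fin 2) ℤ) :
    DerivedVia (qfAct f M) f M := by
  intro x y
  simp only [qfEval, qfAct]
  ring

lemma derivedVia_iff (f g : ℤ × ℤ × ℤ) (M : Matrix (Fin 2) (Fin 2) ℤ) :
    DerivedVia f g M ↔ f = qfAct g M := by
  constructor
  · intro h
    have h1 := h 1 0
    have h2 := h 0 1
    have h3 := h 1 1
    simp only [qfEval] at h1 h2 h3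
    refine Prod.ext ?_ (Prod.ext ?_ ?_) <;> simp only [qfAct] <;> linarith
  · rintro rfl
    exact derivedVia_qfAct g M

lemma derivedVia_trans {f g h : ℤ × ℤ × ℤ} {A B : Matrix (Fin 2) (Fin 2) ℤ}
    (h1 : DerivedVia f g A) (h2 : DerivedVia g h B) : DerivedVia f h (B * A) := by
  intro x y
  rw [h1, h2]
  simp only [Matrix.mul_apply, Fin.sum_univ_two]
  congr 1 <;> ring

lemma derivedVia_one (f : ℤ × ℤ × ℤ) : DerivedVia f f 1 := by
  intro x y
  simp

lemma derivedVia_symm {f g : ℤ × ℤ × ℤ} {A : Matrix (Fin 2) (Fin 2) ℤ} (hA : A.det = 1)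
    (h : DerivedVia f g A) : DerivedVia g f A.adjugate := by
  intro x y
  rw [h]
  rw [Matrix.det_fin_two] at hA
  simp only [Matrix.adjugate_fin_two, Matrix.of_apply, Matrix.cons_val', Matrix.cons_val_zero,
    Matrix.cons_val_one, Matrix.cons_val_fin_one]
  congr 1
  · linear_combination (-x) * hA
  · linear_combination (-y) * hA

lemma det_adj {A : Matrix (Fin 2) (Fin 2) ℤ} (hA : A.det = 1) : A.adjugate.det = 1 := by
  rw [Matrix.det_adjugate, hA]; simp

lemma qfEquiv_equivalence : Equivalence QFEquiv where
  refl f := ⟨1, by simp, derivedVia_one f⟩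
  symm := by
    rintro f g ⟨A, hA, h⟩
    exact ⟨A.adjugate, det_adj hA, derivedVia_symm hA h⟩
  trans := by
    rintro f g h ⟨A, hA, h1⟩ ⟨B, hB, h2⟩
    exact ⟨B * A, by simp [hA, hB], derivedVia_trans h1 h2⟩

lemma qfDisc_act {f g : ℤ × ℤ × ℤ} {A : Matrix (Fin 2) (Fin 2) ℤ} (hA : A.det = 1)
    (h : DerivedVia f g A) : qfDisc f = qfDisc g := by
  rw [derivedVia_iff] at h
  subst h
  rw [Matrix.det_fin_two] at hA
  simp only [qfDisc, qfAct]
  linear_combination (g.2.1 ^ 2 - 4 * g.1 * g.2.2) *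
    (A 0 0 * A 1 1 - A 0 1 * A 1 0 + 1) * hA

lemma prim_iff (f : ℤ × ℤ × ℤ) :
    IsPrimitiveQF f ↔ ∀ q : ℕ, q.Prime → (q : ℤ) ∣ f.1 → (q : ℤ) ∣ f.2.1 → ¬ (q : ℤ) ∣ f.2.2 := by
  unfold IsPrimitiveQF
  constructor
  · intro h q hq h1 h2 h3
    have h4 : (q : ℤ) ∣ Int.gcd f.1 f.2.1 := Int.dvd_coe_gcd h1 h2
    have h5 : (q : ℤ) ∣ Int.gcd (Int.gcd f.1 f.2.1) f.2.2 := Int.dvd_coe_gcd h4 h3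
    rw [h] at h5
    have h6 : q ∣ 1 := by exact_mod_cast h5
    exact hq.one_lt.ne' (Nat.dvd_one.mp h6)
  · intro h
    by_contra hne
    obtain ⟨q, hq, hd⟩ := Nat.exists_prime_and_dvd hne
    have hd' : (q : ℤ) ∣ (Int.gcd (Int.gcd f.1 f.2.1) f.2.2 : ℤ) := by exact_mod_cast hd
    have h1 := hd'.trans (Int.gcd_dvd_left _ _)
    exact h q hq (h1.trans (Int.gcd_dvd_left _ _)) (h1.trans (Int.gcd_dvd_right _ _))
      (hd'.trans (Int.gcd_dvd_right _ _))

lemma prim_act {f g : ℤ × ℤ × ℤ} {A : Matrix (Fin 2) (Fin 2) ℤ} (hA : A.det = 1)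
    (h : DerivedVia f g A) (hg : IsPrimitiveQF g) : IsPrimitiveQF f := by
  have h' := derivedVia_symm hA h
  rw [derivedVia_iff] at h'
  rw [prim_iff] at hg ⊢
  intro q hq h1 h2 h3
  have e1 := congrArg Prod.fst h'
  have e2 := congrArg (fun t => t.2.1) h'
  have e3 := congrArg (fun t => t.2.2) h'
  simp only [qfAct] at e1 e2 e3
  obtain ⟨x, hx⟩ := h1
  obtain ⟨y, hy⟩ := h2
  obtain ⟨z, hz⟩ := h3
  rw [hx, hy, hz] at e1 e2 e3
  refine hg q hq ?_ ?_ ?_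
  · rw [e1]; exact ⟨x * A.adjugate 0 0 ^ 2 + y * A.adjugate 0 0 * A.adjugate 1 0 +
      z * A.adjugate 1 0 ^ 2, by ring⟩
  · rw [e2]; exact ⟨2 * x * A.adjugate 0 0 * A.adjugate 0 1 +
      y * (A.adjugate 0 0 * A.adjugate 1 1 + A.adjugate 0 1 * A.adjugate 1 0) +
      2 * z * A.adjugate 1 0 * A.adjugate 1 1, by ring⟩
  · rw [e3]; exact ⟨x * A.adjugate 0 1 ^ 2 + y * A.adjugate 0 1 * A.adjugate 1 1 +
      z * A.adjugate 1 1 ^ 2, by ring⟩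

lemma pos_act {f g : ℤ × ℤ × ℤ} {A : Matrix (Fin 2) (Fin 2) ℤ} (hA : A.det = 1)
    (h : DerivedVia f g A) (hD : qfDisc g < 0) (hg : 0 < g.1) : 0 < f.1 := by
  rw [derivedVia_iff] at h
  subst h
  rw [Matrix.det_fin_two] at hA
  simp only [qfDisc] at hD
  simp only [qfAct]
  by_contra hcon
  have key : 4 * g.1 * (g.1 * A 0 0 ^ 2 + g.2.1 * A 0 0 * A 1 0 + g.2.2 * A 1 0 ^ 2) =
    (2 * g.1 * A 0 0 + g.2.1 * A 1 0) ^ 2 + (-(g.2.1 ^ 2 - 4 * g.1 * g.2.2)) * A 1 0 ^ 2 := by ring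
  have hle : 4 * g.1 * (g.1 * A 0 0 ^ 2 + g.2.1 * A 0 0 * A 1 0 + g.2.2 * A 1 0 ^ 2) ≤ 0 :=
    mul_nonpos_of_nonneg_of_nonpos (by positivity) (not_lt.mp hcon)
  have h0 : A 1 0 = 0 := by
    by_contra hne
    have : 0 < A 1 0 ^ 2 := by positivity
    nlinarith [sq_nonneg (2 * g.1 * A 0 0 + g.2.1 * A 1 0)]
  rw [h0] at hA hcon
  have h00 : A 0 0 ≠ 0 := by
    intro h; rw [h] at hA; simp at hA
  apply hcon
  have : 0 < A 0 0 ^ 2 := by positivity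
  nlinarith

/-- automorphisms of forms of discriminant below -4 are trivial -/
lemma stab_trivial {f : ℤ × ℤ × ℤ} {C : Matrix (Fin 2) (Fin 2) ℤ} (hC : C.det = 1)
    (h : DerivedVia f f C) (hD : qfDisc f < -4) (hp : IsPrimitiveQF f) (ha : 0 < f.1) :
    C = 1 ∨ C = -1 := by
  obtain ⟨a, b, c⟩ := f
  rw [derivedVia_iff] at h
  rw [Matrix.det_fin_two] at hC
  have e1 := congrArg Prod.fst h
  have e2 := congrArg (fun t => t.2.1) h
  have e3 := congrArg (fun t => t.2.2) h
  simp only [qfAct] at e1 e2 e3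
  simp only [qfDisc] at hD
  simp only at ha
  have l1 : a * (C 1 1 - C 0 0) = b * C 1 0 := by
    have : 2 * (a * (C 1 1 - C 0 0)) = 2 * (b * C 1 0) := by
      linear_combination (2 * C 1 1) * e1 - C 1 0 * e2 +
        (2 * a * C 0 0 + b * C 1 0) * hC
    linarith
  have l2 : a * C 0 1 = -(c * C 1 0) := by
    have : 2 * (a * C 0 1) = 2 * -(c * C 1 0) := by
      linear_combination (2 * C 0 1) * e1 - C 0 0 * e2 -
        (b * C 0 0 + 2 * c * C 1 0) * hC
    linarith
  have hdvd : a ∣ C 1 0 := by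
    have g1 : a ∣ Int.gcd (Int.gcd a b) c * C 1 0 := by
      rw [Int.gcd_eq_gcd_ab (Int.gcd a b : ℤ) c, Int.gcd_eq_gcd_ab a b]
      refine ⟨(Int.gcdA a b * C 1 0 + Int.gcdB a b * (C 1 1 - C 0 0)) *
        Int.gcdA (a * Int.gcdA a b + b * Int.gcdB a b) c
        - C 0 1 * Int.gcdB (a * Int.gcdA a b + b * Int.gcdB a b) c, ?_⟩
      linear_combination (-(Int.gcdB a b *
        Int.gcdA (a * Int.gcdA a b + b * Int.gcdB a b) c)) * l1
        + Int.gcdB (a * Int.gcdA a b + b * Int.gcdB a b) c * l2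
    have hp' : Int.gcd (Int.gcd a b) c = 1 := hp
    rw [hp'] at g1
    simpa using g1
  obtain ⟨u, hu⟩ := hdvd
  have hd : C 1 1 = C 0 0 + b * u := by
    have : a * (C 1 1 - C 0 0 - b * u) = 0 := by rw [hu] at l1; linear_combination l1
    rcases mul_eq_zero.mp this with h | h
    · omega
    · linarith
  have hb : C 0 1 = - c * u := by
    have : a * (C 0 1 + c * u) = 0 := by rw [hu] at l2; linear_combination l2
    rcases mul_eq_zero.mp this with h | h
    · omega
    · linarith
  rw [hd, hb, hu] at hC
  have hpell : (2 * C 0 0 + b * u) ^ 2 + (-(b ^ 2 - 4 * a * c)) * u ^ 2 = 4 := by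
    linear_combination 4 * hC
  have hu0 : u = 0 := by
    by_contra hne
    have : 0 < u ^ 2 := by positivity
    nlinarith [sq_nonneg (2 * C 0 0 + b * u)]
  subst hu0
  simp only [mul_zero, add_zero] at hd hb hu hC
  have hsq : C 0 0 = 1 ∨ C 0 0 = -1 := by
    have : (C 0 0 - 1) * (C 0 0 + 1) = 0 := by linear_combination hC
    rcases mul_eq_zero.mp this with h | h
    · left; linarith
    · right; linarith
  rcases hsq with h | h
  · left
    ext i j
    fin_cases i <;> fin_cases j <;> simp [hd, hb, hu, h]
  · right
    ext i j
    fin_cases i <;> fin_cases j <;> simp [hd, hb, hu, h]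

/-- `f(x, p y)`. -/
def qfUp (p : ℕ) (f : ℤ × ℤ × ℤ) : ℤ × ℤ × ℤ := (f.1, p * f.2.1, p ^ 2 * f.2.2)

lemma qfDisc_up (p : ℕ) (f : ℤ × ℤ × ℤ) : qfDisc (qfUp p f) = qfDisc f * p ^ 2 := by
  simp only [qfDisc, qfUp]; ring

lemma prim_up {p : ℕ} (hp : p.Prime) {f : ℤ × ℤ × ℤ} :
    IsPrimitiveQF (qfUp p f) ↔ IsPrimitiveQF f ∧ ¬ (p : ℤ) ∣ f.1 := by
  simp only [prim_iff, qfUp]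
  constructor
  · intro h
    refine ⟨fun q hq h1 h2 h3 => h q hq h1 (h2.mul_left _) (h3.mul_left _), fun h1 => ?_⟩
    exact h p hp h1 (dvd_mul_right _ _) ((dvd_pow_self _ two_ne_zero).mul_right _)
  · rintro ⟨h, hpa⟩ q hq h1 h2 h3
    have hqp : ¬ (q : ℤ) ∣ (p : ℤ) := by
      intro hd
      have : q ∣ p := by exact_mod_cast hd
      rw [(Nat.prime_dvd_prime_iff_eq hq hp).mp this] at h1
      exact hpa h1
    have hq' : Prime (q : ℤ) := Nat.prime_iff_prime_int.mp hq
    refine h q hq h1 ((hq'.dvd_or_dvd h2).resolve_left hqp) ?_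
    exact (hq'.dvd_or_dvd h3).resolve_left (fun hh => hqp (hq'.dvd_of_dvd_pow hh))

/-- equivalence of lifted forms descends -/
lemma up_descend {p : ℕ} (hp : p.Prime) {u v : ℤ × ℤ × ℤ} (hv : ¬ (p : ℤ) ∣ v.1)
    {B : Matrix (Fin 2) (Fin 2) ℤ} (hB : B.det = 1) (h : DerivedVia (qfUp p u) (qfUp p v) B) :
    ∃ C : Matrix (Fin 2) (Fin 2) ℤ, C.det = 1 ∧ DerivedVia u v C ∧ (p : ℤ) ∣ C 1 0 := by
  have hp' : Prime (p : ℤ) := Nat.prime_iff_prime_int.mp hp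
  have hp0 : (p : ℤ) ≠ 0 := hp'.ne_zero
  rw [derivedVia_iff] at h
  have e1 := congrArg Prod.fst h
  have e2 := congrArg (fun t => t.2.1) h
  have e3 := congrArg (fun t => t.2.2) h
  simp only [qfAct, qfUp] at e1 e2 e3
  have hd : (p : ℤ) ∣ B 0 1 := by
    have : (p : ℤ) ∣ v.1 * B 0 1 ^ 2 :=
      ⟨p * u.2.2 - v.2.1 * B 0 1 * B 1 1 - p * v.2.2 * B 1 1 ^ 2, by linear_combination -e3⟩
    exact hp'.dvd_of_dvd_pow ((hp'.dvd_or_dvd this).resolve_left hv)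
  obtain ⟨t, ht⟩ := hd
  rw [ht] at e2 e3
  rw [Matrix.det_fin_two, ht] at hB
  refine ⟨!![B 0 0, t; p * B 1 0, B 1 1], ?_, ?_, ?_⟩
  · rw [Matrix.det_fin_two]; simp; linarith
  · rw [derivedVia_iff]
    refine Prod.ext ?_ (Prod.ext ?_ ?_)
    · simp [qfAct]; linear_combination e1
    · apply mul_left_cancel₀ hp0
      simp [qfAct, -mul_eq_mul_left_iff]; linear_combination e2
    · apply mul_left_cancel₀ (pow_ne_zero 2 hp0)
      simp [qfAct, -mul_eq_mul_left_iff]; linear_combination e3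
  · simp

lemma up_lift {p : ℕ} {u v : ℤ × ℤ × ℤ}
    {C : Matrix (Fin 2) (Fin 2) ℤ} (hC : C.det = 1) (h : DerivedVia u v C)
    (hd : (p : ℤ) ∣ C 1 0) : QFEquiv (qfUp p u) (qfUp p v) := by
  rw [derivedVia_iff] at h
  subst h
  obtain ⟨t, ht⟩ := hd
  rw [Matrix.det_fin_two, ht] at hC
  refine ⟨!![C 0 0, p * C 0 1; t, C 1 1], ?_, ?_⟩
  · rw [Matrix.det_fin_two]; simp; linarith
  · rw [derivedVia_iff]
    refine Prod.ext ?_ (Prod.ext ?_ ?_) <;> simp [qfAct, qfUp, ht] <;> ring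

/-- every primitive form of discriminant `D p²` is equivalent to a lifted one -/
lemma exists_up {p : ℕ} (hp : p.Prime) (hp2 : p ≠ 2) {D : ℤ} {F : ℤ × ℤ × ℤ}
    (hF : qfDisc F = D * p ^ 2) (hprim : IsPrimitiveQF F) :
    ∃ f, QFEquiv (qfUp p f) F ∧ qfDisc f = D := by
  have hp' : Prime (p : ℤ) := Nat.prime_iff_prime_int.mp hp
  have hp0 : (p : ℤ) ≠ 0 := hp'.ne_zero
  have h2 : ¬ (p : ℤ) ∣ 2 := by
    intro h
    have : p ∣ 2 := by exact_mod_cast h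
    exact hp2 ((Nat.prime_dvd_prime_iff_eq hp Nat.prime_two).mp this)
  have h4 : ¬ (p : ℤ) ∣ 4 := fun h => h2 (hp'.dvd_of_dvd_pow (n := 2) (by norm_num; exact h))
  have main : ∃ G, QFEquiv G F ∧ ¬ (p : ℤ) ∣ G.1 ∧ (p : ℤ) ∣ G.2.1 := by
    by_cases ha : (p : ℤ) ∣ F.1
    · have hb : (p : ℤ) ∣ F.2.1 := by
        apply hp'.dvd_of_dvd_pow (n := 2)
        obtain ⟨t, ht⟩ := ha
        simp only [qfDisc, ht] at hF
        exact ⟨D * p + 4 * t * F.2.2, by linear_combination hF⟩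
      refine ⟨qfAct F !![0, -1; 1, 0], ⟨_, ?_, derivedVia_qfAct _ _⟩, ?_, ?_⟩
      · simp [Matrix.det_fin_two]
      · simpa [qfAct] using (prim_iff F).mp hprim p hp ha hb
      · simpa [qfAct] using hb
    · have h2a : IsCoprime (2 * F.1) (p : ℤ) := by
        rw [isCoprime_comm]
        exact (hp'.coprime_iff_not_dvd).mpr (fun h => (hp'.dvd_or_dvd h).elim h2 ha)
      obtain ⟨s, t, hst⟩ := h2a
      refine ⟨qfAct F !![1, -F.2.1 * s; 0, 1], ⟨_, ?_, derivedVia_qfAct _ _⟩, ?_, ?_⟩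
      · simp [Matrix.det_fin_two]
      · simpa [qfAct] using ha
      · refine ⟨F.2.1 * t, ?_⟩
        simp [qfAct]
        linear_combination (-F.2.1) * hst
  obtain ⟨G, hGF, hGa, ⟨b, hb⟩⟩ := main
  have hGd : qfDisc G = D * p ^ 2 := by
    obtain ⟨A, hA, h⟩ := hGF
    rw [qfDisc_act hA h, hF]
  simp only [qfDisc, hb] at hGd
  have hcop : IsCoprime ((p : ℤ) ^ 2) (4 * G.1) := by
    apply IsCoprime.pow_left
    exact (hp'.coprime_iff_not_dvd).mpr (fun h => (hp'.dvd_or_dvd h).elim h4 hGa)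
  have hc : (p : ℤ) ^ 2 ∣ G.2.2 := by
    apply hcop.dvd_of_dvd_mul_left
    exact ⟨b ^ 2 - D, by linear_combination -hGd⟩
  obtain ⟨c, hc⟩ := hc
  refine ⟨(G.1, b, c), ?_, ?_⟩
  · have : qfUp p (G.1, b, c) = G := by
      refine Prod.ext ?_ (Prod.ext ?_ ?_) <;> simp [qfUp, hb, hc]
    rw [this]; exact hGF
  · apply mul_right_cancel₀ (pow_ne_zero 2 hp0)
    rw [← hGd, hc]; simp only [qfDisc]; ring

/-- matrices indexed by the projective line over `ZMod p` -/
def twMat (p : ℕ) : Option (ZMod p) → Matrix (Fin 2) (Fin 2) ℤ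
  | none => 1
  | some j => !![(j.val : ℤ), -1; 1, 0]

lemma twMat_det (p : ℕ) (l : Option (ZMod p)) : (twMat p l).det = 1 := by
  cases l <;> simp [twMat, Matrix.det_fin_two]

lemma twMat_inj {p : ℕ} (hp : p.Prime) {l l' : Option (ZMod p)}
    {C : Matrix (Fin 2) (Fin 2) ℤ} (hd : (p : ℤ) ∣ C 1 0) {e : ℤ} (he : e = 1 ∨ e = -1)
    (h0 : (twMat p l' * C) 0 0 = e * twMat p l 0 0)
    (h1 : (twMat p l' * C) 1 0 = e * twMat p l 1 0) : l = l' := by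
  haveI : Fact p.Prime := ⟨hp⟩
  have hp' : Prime (p : ℤ) := Nat.prime_iff_prime_int.mp hp
  have hC : ((C 1 0 : ℤ) : ZMod p) = 0 := (ZMod.intCast_zmod_eq_zero_iff_dvd _ _).mpr hd
  have he0 : (e : ZMod p) ≠ 0 := by rcases he with rfl | rfl <;> simp
  have k0 := congrArg (fun z : ℤ => (z : ZMod p)) h0
  have k1 := congrArg (fun z : ℤ => (z : ZMod p)) h1
  cases l with
  | none =>
    cases l' with
    | none => rfl
    | some j' =>
      exfalso
      simp [twMat, Matrix.mul_apply, Fin.sum_univ_two, hC] at k0 k1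
      rw [k1] at k0
      simp at k0
      exact he0 k0.symm
  | some j =>
    cases l' with
    | none =>
      exfalso
      simp [twMat, Matrix.mul_apply, Fin.sum_univ_two, hC] at k0 k1
      exact he0 k1.symm
    | some j' =>
      simp [twMat, Matrix.mul_apply, Fin.sum_univ_two, hC] at k0 k1
      rw [k1, mul_comm] at k0
      rw [mul_left_cancel₀ he0 k0]

/-- every matrix factors through the projective line -/
lemma twMat_exists {p : ℕ} (hp : p.Prime) (A : Matrix (Fin 2) (Fin 2) ℤ) :
    ∃ l, (p : ℤ) ∣ ((twMat p l).adjugate * A) 1 0 := by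
  haveI : Fact p.Prime := ⟨hp⟩
  by_cases h : (p : ℤ) ∣ A 1 0
  · exact ⟨none, by simpa [twMat] using h⟩
  · have h' : ((A 1 0 : ℤ) : ZMod p) ≠ 0 := fun h0 =>
      h ((ZMod.intCast_zmod_eq_zero_iff_dvd _ _).mp h0)
    refine ⟨some ((A 0 0 : ZMod p) / (A 1 0 : ZMod p)), ?_⟩
    rw [← ZMod.intCast_zmod_eq_zero_iff_dvd]
    simp [twMat, Matrix.adjugate_fin_two, Matrix.mul_apply, Fin.sum_univ_two]
    field_simp
    ring

/-- counting the points where the form does not vanish -/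
lemma count_points {p : ℕ} (hp : p.Prime) (hp2 : p ≠ 2) {f : ℤ × ℤ × ℤ} (hf : IsPrimitiveQF f) :
    (Nat.card {l : Option (ZMod p) // ¬ (p : ℤ) ∣ (qfAct f (twMat p l)).1} : ℤ) =
      p - jacobiSym (qfDisc f) p := by
  haveI : Fact p.Prime := ⟨hp⟩
  classical
  have h2 : (2 : ZMod p) ≠ 0 := by
    intro h
    have : ((2 : ℕ) : ZMod p) = 0 := by exact_mod_cast h
    rw [ZMod.natCast_eq_zero_iff] at this
    exact hp2 ((Nat.prime_dvd_prime_iff_eq hp Nat.prime_two).mp this)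
  rw [← jacobiSym.legendreSym.to_jacobiSym]
  have hcs := legendreSym.card_sqrts p hp2 (qfDisc f)
  obtain ⟨a, b, c⟩ := f
  set a' : ZMod p := (a : ZMod p) with ha'
  set b' : ZMod p := (b : ZMod p) with hb'
  set c' : ZMod p := (c : ZMod p) with hc'
  have hD : ((qfDisc (a, b, c) : ℤ) : ZMod p) = b' ^ 2 - 4 * a' * c' := by
    simp [qfDisc, ha', hb', hc']
  have hsome : ∀ j : ZMod p, (p : ℤ) ∣ (qfAct (a, b, c) (twMat p (some j))).1 ↔
      a' * j ^ 2 + b' * j + c' = 0 := by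
    intro j
    rw [← ZMod.intCast_zmod_eq_zero_iff_dvd]
    simp [qfAct, twMat, ha', hb', hc']
  have hnone : (p : ℤ) ∣ (qfAct (a, b, c) (twMat p none)).1 ↔ a' = 0 := by
    rw [← ZMod.intCast_zmod_eq_zero_iff_dvd]
    simp [qfAct, twMat, ha']
  -- total count
  have htot : Nat.card {l : Option (ZMod p) // ¬ (p : ℤ) ∣ (qfAct (a, b, c) (twMat p l)).1} +
      Nat.card {l : Option (ZMod p) // (p : ℤ) ∣ (qfAct (a, b, c) (twMat p l)).1} = p + 1 := by
    rw [Nat.card_eq_fintype_card, Nat.card_eq_fintype_card, Fintype.card_subtype_compl]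
    have h1 : Fintype.card (Option (ZMod p)) = p + 1 := by simp [ZMod.card]
    have h3 := Fintype.card_subtype_le
      (fun l : Option (ZMod p) => (p : ℤ) ∣ (qfAct (a, b, c) (twMat p l)).1)
    rw [h1] at h3 ⊢
    omega
  have hz : (Nat.card {l : Option (ZMod p) // (p : ℤ) ∣ (qfAct (a, b, c) (twMat p l)).1} : ℤ) =
      legendreSym p (qfDisc (a, b, c)) + 1 := by
    by_cases h0 : a' = 0
    · by_cases hb0 : b' = 0
      · have hc0 : c' ≠ 0 := by
          intro hc0
          exact (prim_iff _).mp hf p hp ((ZMod.intCast_zmod_eq_zero_iff_dvd _ _).mp h0)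
            ((ZMod.intCast_zmod_eq_zero_iff_dvd _ _).mp hb0)
            ((ZMod.intCast_zmod_eq_zero_iff_dvd _ _).mp hc0)
        have hL : legendreSym p (qfDisc (a, b, c)) = 0 := by
          rw [legendreSym.eq_zero_iff, hD, h0, hb0]; ring
        rw [hL]
        have : Nat.card {l : Option (ZMod p) //
            (p : ℤ) ∣ (qfAct (a, b, c) (twMat p l)).1} = 1 := by
          rw [Nat.card_eq_one_iff_exists]
          refine ⟨⟨none, hnone.mpr h0⟩, ?_⟩
          rintro ⟨l, hl⟩
          cases l with
          | none => rfl
          | some j =>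
            rw [hsome, h0, hb0] at hl
            simp at hl
            exact absurd hl hc0
        rw [this]; rfl
      · have hL : legendreSym p (qfDisc (a, b, c)) = 1 := by
          rw [legendreSym.eq_one_iff, hD, h0]
          · exact ⟨b', by ring⟩
          · rw [hD, h0]; simpa using hb0
        rw [hL]
        have : Nat.card {l : Option (ZMod p) //
            (p : ℤ) ∣ (qfAct (a, b, c) (twMat p l)).1} = 2 := by
          rw [Nat.card_eq_two_iff]
          refine ⟨⟨none, hnone.mpr h0⟩, ⟨some (-c' / b'), ?_⟩, ?_, ?_⟩
          · rw [hsome, h0]; field_simp; ring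
          · simp
          · ext ⟨l, hl⟩
            cases l with
            | none => simp
            | some j =>
              rw [hsome, h0] at hl
              simp
              rw [eq_div_iff hb0]
              linear_combination hl
        rw [this]; rfl
    · rw [← hcs]
      have : Nat.card {l : Option (ZMod p) // (p : ℤ) ∣ (qfAct (a, b, c) (twMat p l)).1} =
          Nat.card {x : ZMod p | x ^ 2 = ((qfDisc (a, b, c) : ℤ) : ZMod p)} := by
        symm
        have hroot : ∀ x : ZMod p, x ^ 2 = ((qfDisc (a, b, c) : ℤ) : ZMod p) →
            a' * ((x - b') / (2 * a')) ^ 2 + b' * ((x - b') / (2 * a')) + c' = 0 := by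
          intro x hx
          rw [hD] at hx
          field_simp
          linear_combination hx
        refine Nat.card_congr (Equiv.ofBijective
          (fun x => ⟨some ((x.1 - b') / (2 * a')), (hsome _).mpr (hroot x.1 x.2)⟩) ⟨?_, ?_⟩)
        · rintro ⟨x, hx⟩ ⟨y, hy⟩ hxy
          simp [h2, h0] at hxy
          simpa using hxy
        · rintro ⟨l, hl⟩
          cases l with
          | none => exact absurd (hnone.mp hl) h0
          | some j =>
            rw [hsome] at hl
            refine ⟨⟨2 * a' * j + b', ?_⟩, ?_⟩
            · show _ = _
              rw [hD]; linear_combination 4 * a' * hl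
            · simp
              field_simp
      rw [this, Nat.card_eq_fintype_card, Set.toFinset_card]
  have htot' := congrArg (fun n : ℕ => (n : ℤ)) htot
  simp only [Nat.cast_add, Nat.cast_one] at htot'
  linarith

/-- The set of forms counted by `classNumber`. -/
abbrev QFSet (D : ℤ) := {f : ℤ × ℤ × ℤ // qfDisc f = D ∧ IsPrimitiveQF f ∧ 0 < f.1}

/-- The relation on `QFSet`. -/
abbrev qfRel (D : ℤ) : QFSet D → QFSet D → Prop := fun f g => QFEquiv f.1 g.1

lemma qfRel_equivalence (D : ℤ) : Equivalence (qfRel D) where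
  refl f := qfEquiv_equivalence.refl _
  symm h := qfEquiv_equivalence.symm h
  trans h h' := qfEquiv_equivalence.trans h h'

/-- The lift of a form along a point of the projective line. -/
def liftForm {p : ℕ} (hp : p.Prime) {D : ℤ} (hD : D < 0) (f : QFSet D) (l : Option (ZMod p))
    (hl : ¬ (p : ℤ) ∣ (qfAct f.1 (twMat p l)).1) : QFSet (D * p ^ 2) :=
  ⟨qfUp p (qfAct f.1 (twMat p l)), by
    have h := derivedVia_qfAct f.1 (twMat p l)
    refine ⟨?_, ?_, ?_⟩
    · rw [qfDisc_up, qfDisc_act (twMat_det p l) h, f.2.1]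
    · exact (prim_up hp).mpr ⟨prim_act (twMat_det p l) h f.2.2.1, hl⟩
    · show 0 < (qfAct f.1 (twMat p l)).1
      exact pos_act (twMat_det p l) h (by rw [f.2.1]; exact hD) f.2.2.2⟩

lemma classNumber_prime {p : ℕ} (hp : p.Prime) (hp2 : p ≠ 2) {D : ℤ} (hD : D < -4) :
    (classNumber (D * p ^ 2) : ℤ) = classNumber D * (p - jacobiSym D p) := by
  have hD0 : D < 0 := by linarith
  haveI : Fact p.Prime := ⟨hp⟩
  let T : Quot (qfRel D) → Type := fun i =>
    {l : Option (ZMod p) // ¬ (p : ℤ) ∣ (qfAct i.out.1 (twMat p l)).1}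
  let Φ : (Σ i, T i) → Quot (qfRel (D * p ^ 2)) := fun x =>
    Quot.mk _ (liftForm hp hD0 x.1.out x.2.1 x.2.2)
  have hΦ : Function.Bijective Φ := by
    constructor
    · rintro ⟨i, l, hl⟩ ⟨i', l', hl'⟩ h
      have h' : QFEquiv (qfUp p (qfAct i.out.1 (twMat p l)))
          (qfUp p (qfAct i'.out.1 (twMat p l'))) :=
        ((qfRel_equivalence _).quot_mk_eq_iff _ _).mp h
      obtain ⟨B, hB, hBd⟩ := h'
      obtain ⟨C, hC, hCd, hCp⟩ := up_descend hp hl' hB hBd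
      have hder := derivedVia_trans (derivedVia_trans
        (derivedVia_symm (twMat_det p l) (derivedVia_qfAct i.out.1 (twMat p l))) hCd)
        (derivedVia_qfAct i'.out.1 (twMat p l'))
      have hdet : (twMat p l' * (C * (twMat p l).adjugate)).det = 1 := by
        rw [Matrix.det_mul, Matrix.det_mul, hC, twMat_det, det_adj (twMat_det p l)]; rfl
      have hii : i = i' := by
        rw [← Quot.out_eq i, ← Quot.out_eq i']
        exact Quot.sound ⟨_, hdet, hder⟩
      subst hii
      have hst := stab_trivial hdet hder (by rw [i.out.2.1]; exact hD) i.out.2.2.1 i.out.2.2.2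
      have hmul : twMat p l' * (C * (twMat p l).adjugate) * twMat p l = twMat p l' * C := by
        rw [Matrix.mul_assoc, Matrix.mul_assoc, Matrix.adjugate_mul, twMat_det]; simp
      have hll : l = l' := by
        rcases hst with h1 | h1
        · rw [h1, one_mul] at hmul
          exact twMat_inj hp hCp (e := 1) (Or.inl rfl) (by rw [← hmul]; simp)
            (by rw [← hmul]; simp)
        · rw [h1] at hmul
          exact twMat_inj hp hCp (e := -1) (Or.inr rfl) (by rw [← hmul]; simp)
            (by rw [← hmul]; simp)
      subst hll
      rfl
    · intro y
      induction y using Quot.ind with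
      | mk F =>
      obtain ⟨f, ⟨M, hM, hMd⟩, hfD⟩ := exists_up hp hp2 F.2.1 F.2.2.1
      have hprim := (prim_up hp).mp (prim_act hM hMd F.2.2.1)
      have hpos : 0 < (qfUp p f).1 := pos_act hM hMd (by
        rw [F.2.1]
        exact mul_neg_of_neg_of_pos hD0 (by have := hp.pos; positivity)) F.2.2.2
      let f' : QFSet D := ⟨f, hfD, hprim.1, hpos⟩
      let i : Quot (qfRel D) := Quot.mk _ f'
      have hrel : QFEquiv f i.out.1 :=
        ((qfRel_equivalence D).quot_mk_eq_iff f' i.out).mp (Quot.out_eq i).symm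
      obtain ⟨A, hA, hAd⟩ := hrel
      obtain ⟨l, hl⟩ := twMat_exists hp A
      have hder := derivedVia_trans hAd
        (derivedVia_symm (twMat_det p l) (derivedVia_qfAct i.out.1 (twMat p l)))
      have hdet : ((twMat p l).adjugate * A).det = 1 := by
        rw [Matrix.det_mul, hA, det_adj (twMat_det p l)]; rfl
      have hup := up_lift hdet hder hl
      have hFe : QFEquiv (qfUp p (qfAct i.out.1 (twMat p l))) F.1 :=
        qfEquiv_equivalence.trans (qfEquiv_equivalence.symm hup) ⟨M, hM, hMd⟩
      obtain ⟨N, hN, hNd⟩ := hFe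
      exact ⟨⟨i, l, ((prim_up hp).mp (prim_act hN hNd F.2.2.1)).2⟩, Quot.sound ⟨N, hN, hNd⟩⟩
  have hcard : ∀ i, (Nat.card (T i) : ℤ) = p - jacobiSym D p := by
    intro i
    have := count_points hp hp2 (f := i.out.1) i.out.2.2.1
    rw [i.out.2.1] at this
    exact this
  obtain ⟨n, hn⟩ : ∃ n : ℕ, (n : ℤ) = p - jacobiSym D p := by
    refine ⟨(p - jacobiSym D p).toNat, Int.toNat_of_nonneg ?_⟩
    have := hp.one_lt
    rcases jacobiSym.trichotomy D p with h | h | h <;> rw [h] <;> omega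
  have hT : ∀ i, Nat.card (T i) = n := fun i => by
    have := hcard i
    rw [← hn] at this
    exact_mod_cast this
  have key : classNumber (D * p ^ 2) = classNumber D * n := by
    show Nat.card (Quot (qfRel (D * p ^ 2))) = Nat.card (Quot (qfRel D)) * n
    rw [← Nat.card_congr (Equiv.ofBijective Φ hΦ),
      Nat.card_congr ((Equiv.sigmaCongrRight
        (fun i => Finite.equivFinOfCardEq (hT i))).trans (Equiv.sigmaEquivProd _ _)),
      Nat.card_prod, Nat.card_fin]
  rw [key, ← hn]
  push_cast
  rfl

lemma phiD_mul_prime (D : ℤ) {p m : ℕ} (hp : p.Prime) (hm : m ≠ 0) :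
    phiD D (p * m) = phiD D m * (p - jacobiSym (D * m ^ 2) p) := by
  haveI : Fact p.Prime := ⟨hp⟩
  unfold phiD
  have hfac : (p * m).factorization = Finsupp.single p 1 + m.factorization := by
    rw [Nat.factorization_mul hp.ne_zero hm, hp.factorization]
  have hpf : (p * m).primeFactors = insert p m.primeFactors := by
    rw [Nat.primeFactors_mul hp.ne_zero hm, hp.primeFactors]; rfl
  rw [hpf]
  have hne : ∀ q, q ≠ p → (p * m).factorization q = m.factorization q := by
    intro q hq
    rw [hfac]; simp [Finsupp.single_apply, hq.symm]
  have hself : (p * m).factorization p = m.factorization p + 1 := by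
    rw [hfac]; simp [add_comm]
  by_cases hpm : p ∣ m
  · have hmem : p ∈ m.primeFactors := Nat.mem_primeFactors.mpr ⟨hp, hpm, hm⟩
    have hj : jacobiSym (D * m ^ 2) p = 0 := by
      rw [← jacobiSym.legendreSym.to_jacobiSym, legendreSym.eq_zero_iff]
      have : (m : ZMod p) = 0 := (ZMod.natCast_eq_zero_iff _ _).mpr hpm
      simp [this]
    rw [Finset.insert_eq_self.mpr hmem, hj, sub_zero, ← Finset.mul_prod_erase _ _ hmem,
      ← Finset.mul_prod_erase m.primeFactors _ hmem, hself]
    have hpos : 0 < m.factorization p := hp.factorization_pos_of_dvd hm hpm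
    have hE : ∏ x ∈ m.primeFactors.erase p,
        (x : ℤ) ^ ((p * m).factorization x - 1) * ((x : ℤ) - jacobiSym D x) =
        ∏ x ∈ m.primeFactors.erase p,
        (x : ℤ) ^ (m.factorization x - 1) * ((x : ℤ) - jacobiSym D x) :=
      Finset.prod_congr rfl fun q hq => by rw [hne q (Finset.ne_of_mem_erase hq)]
    rw [hE]
    obtain ⟨k, hk⟩ : ∃ k, m.factorization p = k + 1 := ⟨_, (Nat.succ_pred_eq_of_pos hpos).symm⟩
    rw [hk]
    simp only [Nat.add_sub_cancel]
    ring
  · have hmem : p ∉ m.primeFactors := fun h => hpm (Nat.dvd_of_mem_primeFactors h)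
    have hj : jacobiSym (D * m ^ 2) p = jacobiSym D p := by
      rw [jacobiSym.mul_left, jacobiSym.sq_one', mul_one]
      rw [Int.gcd_natCast_natCast]
      exact ((Nat.Prime.coprime_iff_not_dvd hp).mpr hpm).symm
    rw [Finset.prod_insert hmem, hj, hself, Nat.factorization_eq_zero_of_not_dvd hpm]
    have hE : ∏ x ∈ m.primeFactors,
        (x : ℤ) ^ ((p * m).factorization x - 1) * ((x : ℤ) - jacobiSym D x) =
        ∏ x ∈ m.primeFactors,
        (x : ℤ) ^ (m.factorization x - 1) * ((x : ℤ) - jacobiSym D x) :=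
      Finset.prod_congr rfl fun q hq => by
        rw [hne q (fun h => hmem (h ▸ hq))]
    rw [hE]
    simp
    ring

lemma classNumber_odd (D : ℤ) (hD4 : D < -4) (r : ℕ) :
    Odd r → (classNumber (D * (r : ℤ) ^ 2) : ℤ) = (classNumber D : ℤ) * phiD D r := by
  induction r using induction_on_primes with
  | zero => intro h; simp at h
  | one => intro _; simp [phiD]
  | prime_mul p m hp ih =>
    intro h
    obtain ⟨hpo, hmo⟩ := Nat.odd_mul.mp h
    have hp2 : p ≠ 2 := by rintro rfl; exact absurd hpo (by decide)
    have hm0 : m ≠ 0 := by rintro rfl; exact absurd hmo (by decide)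
    have hm1 : (1 : ℤ) ≤ (m : ℤ) ^ 2 := by
      have : (0 : ℤ) < (m : ℤ) ^ 2 := by positivity
      linarith
    have hlt : D * (m : ℤ) ^ 2 < -4 := by nlinarith
    have e : D * ((p * m : ℕ) : ℤ) ^ 2 = D * (m : ℤ) ^ 2 * (p : ℤ) ^ 2 := by push_cast; ring
    rw [e, classNumber_prime hp hp2 hlt, ih hmo, phiD_mul_prime D hp hm0]
    ring

theorem stmt6 (D : ℤ) (hD4 : D < -4) (hDmod : D % 4 = 0 ∨ D % 4 = 1)
    (r : ℕ) (hr : 1 < r) (hodd : Odd r) :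
    (classNumber (D * (r : ℤ) ^ 2) : ℤ) = (classNumber D : ℤ) * phiD D r := 
  classNumber_odd D hD4 r hodd
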